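/- With the construction below, there is no subset I ⊆ {1,...,n} such that ∑_{i∈I} a_i = ⌊(∑_{i=1}^{n} a_i)/2⌋ (Chvátal's condition (d)). -/

import Mathlib

theorem chv_aux {n : ℕ} (p : Fin n → ℕ) (hp : ∀ i, (p i).Prime) (hinj : Function.Injective p)
    (I J : Finset (Fin n)) (hd : Disjoint I J) (k : Fin n) (hk : k ∈ I)
    (hmax : ∀ i ∈ I, p i ≤ p k)
    (h : ∏ i ∈ I, (1 - 1 / (p i : ℝ)) = ∏ i ∈ J, (1 - 1 / (p i : ℝ)))
    (hmaxJ : ∀ i ∈ J, p i ≤ p k) : False := by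
  have key : ∀ S : Finset (Fin n), (∏ i ∈ S, (1 - 1 / (p i : ℝ))) * ∏ i ∈ S, (p i : ℝ)
      = ((∏ i ∈ S, (p i - 1) : ℕ) : ℝ) := by
    intro S
    rw [← Finset.prod_mul_distrib, Nat.cast_prod]
    refine Finset.prod_congr rfl fun i _ => ?_
    have h1 := (hp i).one_lt
    have h2 : (p i : ℝ) ≠ 0 := by exact_mod_cast (hp i).ne_zero
    rw [Nat.cast_sub h1.le]
    field_simp
    simp
  have e : (∏ i ∈ I, (p i - 1)) * ∏ i ∈ J, p i = (∏ i ∈ J, (p i - 1)) * ∏ i ∈ I, p i := by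
    have : (((∏ i ∈ I, (p i - 1) : ℕ) : ℝ)) * ∏ i ∈ J, (p i : ℝ)
        = ((∏ i ∈ J, (p i - 1) : ℕ) : ℝ) * ∏ i ∈ I, (p i : ℝ) := by
      rw [← key I, ← key J, h]; ring
    exact_mod_cast this
  have hdvd : p k ∣ (∏ i ∈ I, (p i - 1)) * ∏ i ∈ J, p i := by
    rw [e]
    exact Dvd.dvd.mul_left (Finset.dvd_prod_of_mem p hk) _
  rcases (hp k).dvd_mul.1 hdvd with h1 | h1
  · obtain ⟨i, hi, h2⟩ := ((hp k).prime.dvd_finsetProd_iff _).1 h1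
    have h3 := (hp i).one_lt
    have := Nat.le_of_dvd (by omega) h2
    have := hmax i hi
    omega
  · obtain ⟨i, hi, h2⟩ := ((hp k).prime.dvd_finsetProd_iff _).1 h1
    have h3 := (Nat.prime_dvd_prime_iff_eq (hp k) (hp i)).1 h2
    have h4 := hinj h3
    subst h4
    exact (Finset.disjoint_left.1 hd hk) hi

theorem chv_ne {n : ℕ} (p : Fin n → ℕ) (hp : ∀ i, (p i).Prime) (hinj : Function.Injective p)
    (w : Fin n → ℝ) (hw : ∀ i, w i = -Real.log (1 - 1 / (p i : ℝ)))
    (I J : Finset (Fin n)) (hd : Disjoint I J) (hne : (I ∪ J).Nonempty) :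
    ∑ i ∈ I, w i ≠ ∑ j ∈ J, w j := by
  intro h
  have hpos : ∀ i, 0 < 1 - 1 / (p i : ℝ) := by
    intro i
    have h1 : (1 : ℝ) < p i := by exact_mod_cast (hp i).one_lt
    have : 1 / (p i : ℝ) < 1 := by rw [div_lt_one (by linarith)]; exact h1
    linarith
  have key : ∀ S : Finset (Fin n), ∏ i ∈ S, (1 - 1 / (p i : ℝ)) = Real.exp (-∑ i ∈ S, w i) := by
    intro S
    rw [← Finset.sum_neg_distrib, Real.exp_sum]
    refine Finset.prod_congr rfl fun i _ => ?_
    rw [hw, neg_neg, Real.exp_log (hpos i)]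
  have hprod : ∏ i ∈ I, (1 - 1 / (p i : ℝ)) = ∏ i ∈ J, (1 - 1 / (p i : ℝ)) := by
    rw [key, key, h]
  obtain ⟨k, hk, hmax⟩ := Finset.exists_max_image (I ∪ J) p hne
  have hI : ∀ i ∈ I, p i ≤ p k := fun i hi => hmax i (Finset.mem_union_left _ hi)
  have hJ : ∀ i ∈ J, p i ≤ p k := fun i hi => hmax i (Finset.mem_union_right _ hi)
  rcases Finset.mem_union.1 hk with hk | hk
  · exact chv_aux p hp hinj I J hd k hk hI hprod hJ
  · exact chv_aux p hp hinj J I hd.symm k hk hJ hprod.symm hI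

open Finset in
/-- Chvátal's condition (d): no subset sum equals `⌊(∑ᵢ aᵢ)/2⌋`. -/
theorem chvatal_condition_d
    (n : ℕ) (hn : 1 ≤ n)
    (p : Fin n → ℕ) (hp : ∀ i, (p i).Prime) (hinj : Function.Injective p)
    (w : Fin n → ℝ) (hw : ∀ i, w i = -Real.log (1 - 1 / (p i : ℝ)))
    (hmono : ∀ i j : Fin n, i ≤ j → w j ≤ w i)
    (hratio : w ⟨0, by omega⟩ ≤ 2 * w ⟨n - 1, by omega⟩)
    (ε : ℝ)
    (hε : IsLeast {d : ℝ | ∃ I J : Finset (Fin n), Disjoint I J ∧ (I ∪ J).Nonempty ∧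
        d = |∑ i ∈ I, w i - ∑ j ∈ J, w j|} ε)
    (x : ℝ) (hx : 4 * n / ε < x)
    (c : ℕ)
    (hc : c = ((Finset.univ : Finset (Fin n)).filter fun i : Fin n => (i : ℕ) < n / 2).lcm
        fun i => (⌊w i * x⌋).toNat)
    (a : Fin n → ℕ)
    (ha : ∀ i : Fin n, a i = if (i : ℕ) < n / 2 then c * (⌊w i * x⌋).toNat
        else c * (⌊w i * x⌋).toNat + 1)
    : ¬ ∃ I : Finset (Fin n), ∑ i ∈ I, a i = (∑ i : Fin n, a i) / 2 := by
  rintro ⟨I, hI⟩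
  have hεpos : 0 < ε := by
    obtain ⟨A, B, hd, hne, he⟩ := hε.1
    rw [he]
    exact abs_pos.2 (sub_ne_zero.2 (chv_ne p hp hinj w hw A B hd hne))
  have hnR : (1 : ℝ) ≤ n := by exact_mod_cast hn
  have hxε : 4 * (n : ℝ) < x * ε := (div_lt_iff₀ hεpos).1 hx
  have hxpos : 0 < x := lt_of_le_of_lt (by positivity) hx
  have hwpos : ∀ i, 0 ≤ w i := by
    intro i
    rw [hw]
    have h1 : (1 : ℝ) < p i := by exact_mod_cast (hp i).one_lt
    have h2 : 1 / (p i : ℝ) < 1 := by rw [div_lt_one (by linarith)]; exact h1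
    have h3 : 0 < 1 / (p i : ℝ) := by positivity
    have := Real.log_nonpos (x := 1 - 1 / (p i : ℝ)) (by linarith) (by linarith)
    linarith
  have hwε : ∀ i, ε ≤ w i := by
    intro i
    refine hε.2 ⟨{i}, ∅, by simp, by simp, ?_⟩
    simp [abs_of_nonneg (hwpos i)]
  have hwx : ∀ i, 4 < w i * x := by
    intro i
    have := mul_le_mul_of_nonneg_right (hwε i) hxpos.le
    linarith
  have hm : ∀ i, (((⌊w i * x⌋).toNat : ℕ) : ℝ) ≤ w i * x ∧
      w i * x < (((⌊w i * x⌋).toNat : ℕ) : ℝ) + 1 := by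
    intro i
    have h0 : 0 ≤ ⌊w i * x⌋ := Int.floor_nonneg.2 (by linarith [hwx i])
    have h1 : (((⌊w i * x⌋).toNat : ℕ) : ℝ) = (⌊w i * x⌋ : ℝ) := by
      exact_mod_cast Int.toNat_of_nonneg h0
    rw [h1]
    exact ⟨Int.floor_le _, Int.lt_floor_add_one _⟩
  have hc1 : 1 ≤ c := by
    rw [Nat.one_le_iff_ne_zero, hc, Ne, Finset.lcm_eq_zero_iff]
    rintro ⟨i, _, hi⟩
    have := (hm i).2
    rw [hi] at this
    have := hwx i
    norm_num at *
    linarith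
  have hcR : (1 : ℝ) ≤ c := by exact_mod_cast hc1
  have hdev : ∀ i, |(a i : ℝ) - c * x * w i| ≤ c := by
    intro i
    obtain ⟨h1, h2⟩ := hm i
    have h3 := mul_le_mul_of_nonneg_left h1 (by linarith : (0 : ℝ) ≤ c)
    have h4 := mul_le_mul_of_nonneg_left h2.le (by linarith : (0 : ℝ) ≤ c)
    rw [ha, abs_le]
    split_ifs <;> push_cast <;> constructor <;> nlinarith
  have hS : ∀ S : Finset (Fin n), |∑ i ∈ S, (a i : ℝ) - c * x * ∑ i ∈ S, w i| ≤ S.card * c := by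
    intro S
    rw [Finset.mul_sum, ← Finset.sum_sub_distrib]
    refine (Finset.abs_sum_le_sum_abs _ _).trans ?_
    refine (Finset.sum_le_sum fun i _ => hdev i).trans ?_
    simp
  have hcard : (I.card : ℝ) + (Iᶜ.card : ℝ) = n := by
    have := Finset.card_add_card_compl I
    rw [Fintype.card_fin] at this
    exact_mod_cast this
  have hlow : ε ≤ |∑ i ∈ I, w i - ∑ i ∈ Iᶜ, w i| := by
    refine hε.2 ⟨I, Iᶜ, disjoint_compl_right, ?_, rfl⟩
    rw [Finset.union_compl]
    exact ⟨⟨0, by omega⟩, Finset.mem_univ _⟩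
  have hsum := Finset.sum_add_sum_compl I a
  have hb1 : ∑ i ∈ I, a i ≤ ∑ i ∈ Iᶜ, a i := by omega
  have hb2 : ∑ i ∈ Iᶜ, a i ≤ ∑ i ∈ I, a i + 1 := by omega
  have hb1R : ∑ i ∈ I, (a i : ℝ) ≤ ∑ i ∈ Iᶜ, (a i : ℝ) := by exact_mod_cast hb1
  have hb2R : ∑ i ∈ Iᶜ, (a i : ℝ) ≤ ∑ i ∈ I, (a i : ℝ) + 1 := by exact_mod_cast hb2
  have s1 := abs_le.1 (hS I)
  have s2 := abs_le.1 (hS Iᶜ)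
  have hcx : 0 < c * x := by positivity
  have hprod : (c : ℝ) * (4 * n) < c * (x * ε) := mul_lt_mul_of_pos_left hxε (by linarith)
  have hcn : (1 : ℝ) ≤ c * n := by nlinarith
  have hcc : (I.card : ℝ) * c + Iᶜ.card * c = c * n := by rw [← hcard]; ring
  rcases le_abs.1 hlow with h | h
  · have := mul_le_mul_of_nonneg_left h hcx.le
    linarith [s1.1, s1.2, s2.1, s2.2]
  · have := mul_le_mul_of_nonneg_left h hcx.le
    linarith [s1.1, s1.2, s2.1, s2.2]
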